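/- arXiv:2504.11854 — 2 statements merged into one kernel-verified Lean document; each statement's English description precedes it below -/
import Mathlib

section
/- For any DAO with member valuations v_1 ≥ v_2 ≥ ⋯ ≥ v_n ≥ 0, there exists a continuous grouping 𝒢 of {1,…,n} that achieves the maximum total willingness to pay over all groupings, i.e. WTP_total(𝒢) = opt_WTP where opt_WTP = max over all k and all groupings 𝒢' into k nonempty subgroups of WTP_total(𝒢'). -/
open scoped Classical

noncomputable section

/-- The willingness to pay of a subgroup `S` of members, where `v` lists the members'
valuations (non-increasing in the index): `WTP(S) = max_{1 ≤ i ≤ |S|} i · w_i`, where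
`w_1 ≥ ⋯ ≥ w_m` are the valuations of the members of `S` in non-increasing order.
Since `v` is non-increasing, the rank of member `a` in `S` is `|{c ∈ S : c ≤ a}|`. -/
def WTP (v : ℕ → ℝ) (S : Finset ℕ) : ℝ :=
  sSup ((fun a => ((S.filter (fun c => c ≤ a)).card : ℝ) * v a) '' (S : Set ℕ))

/-- The total willingness to pay of a grouping `𝒢`: listing the subgroup values
non-increasingly as `W_1 ≥ ⋯ ≥ W_k`, it is `max_{1 ≤ j ≤ k} j · W_j`.  Equivalently,
it is the max over `G ∈ 𝒢` of `|{G' ∈ 𝒢 : WTP(G') ≥ WTP(G)}| · WTP(G)`. -/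
def WTPtotal (v : ℕ → ℝ) (𝒢 : Finset (Finset ℕ)) : ℝ :=
  sSup ((fun G => ((𝒢.filter (fun G' => WTP v G ≤ WTP v G')).card : ℝ) * WTP v G) ''
    (𝒢 : Set (Finset ℕ)))

/-- `𝒢` is a grouping of the members `{1, …, n}`: a partition into nonempty subgroups. -/
def IsGrouping (n : ℕ) (𝒢 : Finset (Finset ℕ)) : Prop :=
  (∀ G ∈ 𝒢, G.Nonempty) ∧
  (𝒢 : Set (Finset ℕ)).PairwiseDisjoint id ∧
  𝒢.sup id = Finset.Icc 1 n

/-- A grouping is continuous if every subgroup is a set of consecutive indices. -/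
def ContinuousGrouping (𝒢 : Finset (Finset ℕ)) : Prop :=
  ∀ G ∈ 𝒢, ∀ a ∈ G, ∀ c ∈ G, ∀ b, a ≤ b → b ≤ c → b ∈ G

/-!
Think of `WTP(S)` as attained at a member `a` of rank `m` in `S`: the `m` members of `S` up to `a`
form a job of length `m` with deadline `a`. The jobs of disjoint subgroups can be run one after
another, since those due by time `t` use distinct members of `{1, …, t}`, so that running them in
order of their deadlines meets all deadlines (the earliest-deadline-first schedule). The time slots
are then consecutive blocks, and as `v` is non-increasing a job that ends no later than `a` has a
block worth at least `m * v a`. Applied to the `j` subgroups behind an optimal value `j * W_j`,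
this gives `j` consecutive blocks worth at least `W_j` each.
-/

section

open Finset

variable {n : ℕ} {v : ℕ → ℝ} {S : Finset ℕ} {𝒢 : Finset (Finset ℕ)}

theorem WTP_eq_sup' (hS : S.Nonempty) :
    WTP v S = S.sup' hS fun a => (#{c ∈ S | c ≤ a} : ℝ) * v a :=
  (sup'_eq_csSup_image S hS _).symm

theorem WTPtotal_eq_sup' (h𝒢 : 𝒢.Nonempty) :
    WTPtotal v 𝒢 = 𝒢.sup' h𝒢 fun G => (#{G' ∈ 𝒢 | WTP v G ≤ WTP v G'} : ℝ) * WTP v G :=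
  (sup'_eq_csSup_image 𝒢 h𝒢 _).symm

theorem exists_WTP_eq (hS : S.Nonempty) : ∃ a ∈ S, WTP v S = #{c ∈ S | c ≤ a} * v a :=
  WTP_eq_sup' (v := v) hS ▸ exists_mem_eq_sup' hS _

theorem exists_WTPtotal_eq (h𝒢 : 𝒢.Nonempty) :
    ∃ G ∈ 𝒢, WTPtotal v 𝒢 = #{G' ∈ 𝒢 | WTP v G ≤ WTP v G'} * WTP v G :=
  WTPtotal_eq_sup' (v := v) h𝒢 ▸ exists_mem_eq_sup' h𝒢 _

theorem mul_le_WTP_Ioc {M N m : ℕ} (hm : 0 < m) (hN : M + m ≤ N) :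
    m * v (M + m) ≤ WTP v (Ioc M N) := by
  have hmem : M + m ∈ Ioc M N := mem_Ioc.2 ⟨by omega, hN⟩
  have hrank : #{c ∈ Ioc M N | c ≤ M + m} = m := by
    have hfilter : {c ∈ Ioc M N | c ≤ M + m} = Ioc M (M + m) := by grind
    rw [hfilter, Nat.card_Ioc, Nat.add_sub_cancel_left]
  calc m * v (M + m) = #{c ∈ Ioc M N | c ≤ M + m} * v (M + m) := by rw [hrank]
    _ ≤ (Ioc M N).sup' ⟨_, hmem⟩ fun a => (#{c ∈ Ioc M N | c ≤ a} : ℝ) * v a :=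
      le_sup' (fun a => (#{c ∈ Ioc M N | c ≤ a} : ℝ) * v a) hmem
    _ = WTP v (Ioc M N) := (WTP_eq_sup' _).symm

theorem card_mul_le_WTPtotal {W : ℝ} (h𝒢 : 𝒢.Nonempty) (hW : ∀ G ∈ 𝒢, W ≤ WTP v G) :
    #𝒢 * W ≤ WTPtotal v 𝒢 := by
  obtain ⟨G, hG, hmin⟩ := 𝒢.exists_min_image (WTP v) h𝒢
  calc #𝒢 * W ≤ #𝒢 * WTP v G := by gcongr; exact hW G hG
    _ = #{G' ∈ 𝒢 | WTP v G ≤ WTP v G'} * WTP v G := by rw [filter_true_of_mem hmin]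
    _ ≤ 𝒢.sup' h𝒢 fun G => (#{G' ∈ 𝒢 | WTP v G ≤ WTP v G'} : ℝ) * WTP v G :=
      le_sup' (fun G => (#{G' ∈ 𝒢 | WTP v G ≤ WTP v G'} : ℝ) * WTP v G) hG
    _ = WTPtotal v 𝒢 := (WTPtotal_eq_sup' h𝒢).symm

namespace IsGrouping

theorem subset_Icc (h : IsGrouping n 𝒢) {G : Finset ℕ} (hG : G ∈ 𝒢) : G ⊆ Icc 1 n :=
  h.2.2 ▸ le_sup (f := id) hG

theorem nonempty (h : IsGrouping n 𝒢) (hn : 1 ≤ n) : 𝒢.Nonempty := by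
  have h1 : 1 ∈ 𝒢.sup id := h.2.2 ▸ left_mem_Icc.2 hn
  obtain ⟨G, hG, -⟩ := mem_sup.1 h1
  exact ⟨G, hG⟩

theorem sum_card_filter_le (h : IsGrouping n 𝒢) (t : ℕ) : ∑ G ∈ 𝒢, #{c ∈ G | c ≤ t} ≤ t := by
  have hdisj : (𝒢 : Set (Finset ℕ)).PairwiseDisjoint fun G => {c ∈ G | c ≤ t} :=
    h.2.1.mono fun G => filter_subset _ G
  have hsub : (𝒢.biUnion fun G => {c ∈ G | c ≤ t}) ⊆ Icc 1 t :=
    biUnion_subset.2 fun G hG c hc =>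
      have ⟨hcG, hct⟩ := mem_filter.1 hc
      mem_Icc.2 ⟨(mem_Icc.1 (h.subset_Icc hG hcG)).1, hct⟩
  calc ∑ G ∈ 𝒢, #{c ∈ G | c ≤ t} = #(𝒢.biUnion fun G => {c ∈ G | c ≤ t}) :=
        (card_biUnion hdisj).symm
    _ ≤ #(Icc 1 t) := card_le_card hsub
    _ = t := by simp

theorem sum_card_filter_le_of_subset (h : IsGrouping n 𝒢) {s : Finset (Finset ℕ)} (hs : s ⊆ 𝒢)
    (d : Finset ℕ → ℕ) (t : ℕ) : ∑ G ∈ s with d G ≤ t, #{c ∈ G | c ≤ d G} ≤ t :=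
  calc ∑ G ∈ s with d G ≤ t, #{c ∈ G | c ≤ d G} ≤ ∑ G ∈ s with d G ≤ t, #{c ∈ G | c ≤ t} :=
        sum_le_sum fun G hG => card_le_card <| monotone_filter_right G fun _ _ hc =>
          hc.trans (mem_filter.1 hG).2
    _ ≤ ∑ G ∈ 𝒢, #{c ∈ G | c ≤ t} := sum_le_sum_of_subset ((filter_subset _ s).trans hs)
    _ ≤ t := h.sum_card_filter_le t

theorem Ioc_notMem {M N : ℕ} (h : IsGrouping M 𝒢) (hMN : M < N) : Ioc M N ∉ 𝒢 := fun hmem =>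
  have hNM : N ≤ M := (mem_Icc.1 (h.subset_Icc hmem (right_mem_Ioc.2 hMN))).2
  hNM.not_gt hMN

theorem insert_Ioc {M N : ℕ} (h : IsGrouping M 𝒢) (hMN : M < N) :
    IsGrouping N (insert (Ioc M N) 𝒢) := by
  refine ⟨forall_mem_insert _ _ _ |>.2 ⟨nonempty_Ioc.2 hMN, h.1⟩, ?_, ?_⟩
  · rw [coe_insert]
    refine h.2.1.insert fun G hG _ => disjoint_left.2 fun x hx hxG => ?_
    exact (mem_Icc.1 (h.subset_Icc hG hxG)).2.not_gt (mem_Ioc.1 hx).1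
  · rw [sup_insert, h.2.2]
    ext x
    simp only [id_eq, sup_eq_union, mem_union, mem_Ioc, mem_Icc]
    omega

end IsGrouping

theorem isGrouping_empty : IsGrouping 0 ∅ := by simp [IsGrouping]

theorem isGrouping_singleton (hn : 1 ≤ n) : IsGrouping n {Icc 1 n} := by simp [IsGrouping, hn]

theorem finite_setOf_isGrouping (n : ℕ) : {𝒢 | IsGrouping n 𝒢}.Finite :=
  (Icc 1 n).powerset.powerset.finite_toSet.subset fun _ h =>
    mem_powerset.2 fun _ hG => mem_powerset.2 (h.subset_Icc hG)

theorem continuousGrouping_of_forall_eq_Ioc (h : ∀ G ∈ 𝒢, ∃ M N, G = Ioc M N) :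
    ContinuousGrouping 𝒢 := by
  intro G hG a ha c hc b hab hbc
  obtain ⟨M, N, rfl⟩ := h G hG
  exact mem_Ioc.2 ⟨(mem_Ioc.1 ha).1.trans_le hab, hbc.trans (mem_Ioc.1 hc).2⟩

-- Job `i` has length `m i` and deadline `d i`. The job with the last deadline is run last and its
-- block absorbs the spare time up to `N`; hence a block may be longer than the job it is made for.
theorem exists_isGrouping_Ioc_of_deadlines {ι : Type*} {s : Finset ι} {m d : ι → ℕ}
    (hm : ∀ i ∈ s, 0 < m i) (hd : ∀ t, ∑ i ∈ s with d i ≤ t, m i ≤ t) {N : ℕ}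
    (hN : ∑ i ∈ s, m i ≤ N) (h0 : s = ∅ → N = 0) :
    ∃ 𝒢, IsGrouping N 𝒢 ∧ #𝒢 = #s ∧
      ∀ G ∈ 𝒢, ∃ i ∈ s, ∃ M K, G = Ioc M K ∧ M + m i ≤ K ∧ M + m i ≤ d i := by
  induction s using Finset.induction_on_max_value d generalizing N with
  | empty =>
    obtain rfl := h0 rfl
    exact ⟨∅, isGrouping_empty, rfl, by simp⟩
  | insert i s hi hlast ih =>
    set M := ∑ k ∈ s, m k with hM
    have hsum : ∑ k ∈ insert i s, m k = M + m i := by rw [sum_insert hi, add_comm]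
    have hdue : {k ∈ insert i s | d k ≤ d i} = insert i s :=
      filter_true_of_mem (forall_mem_insert _ _ _ |>.2 ⟨le_rfl, hlast⟩)
    have hdeadline : M + m i ≤ d i := by simpa only [hdue, hsum] using hd (d i)
    obtain ⟨𝒢, h𝒢, hcard, hblock⟩ := ih (fun k hk => hm k (mem_insert_of_mem hk))
      (fun t => (sum_le_sum_of_subset (filter_subset_filter _ (subset_insert i s))).trans (hd t))
      hM.ge (by rintro rfl; exact hM)
    have hMN : M < N := by have hpos := hm i (mem_insert_self i s); omega
    refine ⟨insert (Ioc M N) 𝒢, h𝒢.insert_Ioc hMN, ?_, forall_mem_insert _ _ _ |>.2 ⟨?_, ?_⟩⟩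
    · rw [card_insert_of_notMem (h𝒢.Ioc_notMem hMN), card_insert_of_notMem hi, hcard]
    · exact ⟨i, mem_insert_self i s, M, N, rfl, hsum ▸ hN, hdeadline⟩
    · intro G hG
      obtain ⟨k, hk, hkG⟩ := hblock G hG
      exact ⟨k, mem_insert_of_mem hk, hkG⟩

theorem IsGrouping.exists_continuousGrouping_card_eq {W : ℝ} (h : IsGrouping n 𝒢)
    (hv : AntitoneOn v (Set.Icc 1 n)) {s : Finset (Finset ℕ)} (hs𝒢 : s ⊆ 𝒢) (hs : s.Nonempty)
    (hW : ∀ S ∈ s, W ≤ WTP v S) :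
    ∃ ℋ, IsGrouping n ℋ ∧ ContinuousGrouping ℋ ∧ #ℋ = #s ∧ ∀ H ∈ ℋ, W ≤ WTP v H := by
  choose! a ha hWTP using fun S hS => exists_WTP_eq (v := v) (h.1 S hS)
  have haI : ∀ S ∈ s, a S ∈ Icc 1 n := fun S hS => h.subset_Icc (hs𝒢 hS) (ha S (hs𝒢 hS))
  let m : Finset ℕ → ℕ := fun S => #{c ∈ S | c ≤ a S}
  have hm : ∀ S ∈ s, 0 < m S := fun S hS =>
    card_pos.2 ⟨a S, mem_filter.2 ⟨ha S (hs𝒢 hS), le_rfl⟩⟩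
  have hd : ∀ t, ∑ S ∈ s with a S ≤ t, m S ≤ t := h.sum_card_filter_le_of_subset hs𝒢 a
  have hsum : ∑ S ∈ s, m S ≤ n := by
    simpa only [filter_true_of_mem fun S hS => (mem_Icc.1 (haI S hS)).2] using hd n
  obtain ⟨ℋ, hℋ, hcard, hblock⟩ :=
    exists_isGrouping_Ioc_of_deadlines hm hd hsum fun hs0 => absurd hs0 hs.ne_empty
  refine ⟨ℋ, hℋ, continuousGrouping_of_forall_eq_Ioc fun H hH => ?_, hcard, fun H hH => ?_⟩
  · obtain ⟨-, -, M, K, hHeq, -⟩ := hblock H hH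
    exact ⟨M, K, hHeq⟩
  · obtain ⟨S, hS, M, K, rfl, hK, hdeadline⟩ := hblock H hH
    have hpos : 1 ≤ M + m S := (hm S hS).trans_le (Nat.le_add_left _ _)
    have han : a S ≤ n := (mem_Icc.1 (haI S hS)).2
    calc W ≤ WTP v S := hW S hS
      _ = m S * v (a S) := hWTP S (hs𝒢 hS)
      _ ≤ m S * v (M + m S) := by
        gcongr
        exact hv ⟨hpos, hdeadline.trans han⟩ (mem_Icc.1 (haI S hS)) hdeadline
      _ ≤ WTP v (Ioc M K) := mul_le_WTP_Ioc (hm S hS) hK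

theorem IsGrouping.exists_continuousGrouping_WTPtotal_le (h : IsGrouping n 𝒢) (hn : 1 ≤ n)
    (hv : AntitoneOn v (Set.Icc 1 n)) :
    ∃ ℋ, IsGrouping n ℋ ∧ ContinuousGrouping ℋ ∧ WTPtotal v 𝒢 ≤ WTPtotal v ℋ := by
  obtain ⟨G, hG, htotal⟩ := exists_WTPtotal_eq (v := v) (h.nonempty hn)
  obtain ⟨ℋ, hℋ, hcont, hcard, hW⟩ := h.exists_continuousGrouping_card_eq hv
    (filter_subset (fun G' => WTP v G ≤ WTP v G') 𝒢) ⟨G, mem_filter.2 ⟨hG, le_rfl⟩⟩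
    fun _ hS => (mem_filter.1 hS).2
  refine ⟨ℋ, hℋ, hcont, ?_⟩
  rw [htotal, ← hcard]
  exact card_mul_le_WTPtotal (hℋ.nonempty hn) hW

end

theorem stmt1_general (n : ℕ) (v : ℕ → ℝ) (hn : 1 ≤ n) (hv : AntitoneOn v (Set.Icc 1 n)) :
    ∃ 𝒢 : Finset (Finset ℕ),
      IsGrouping n 𝒢 ∧ ContinuousGrouping 𝒢 ∧
      IsGreatest {W : ℝ | ∃ 𝒢' : Finset (Finset ℕ), IsGrouping n 𝒢' ∧ WTPtotal v 𝒢' = W}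
        (WTPtotal v 𝒢) := by
  obtain ⟨𝒢, h𝒢, hmax⟩ := Set.exists_max_image {𝒢 | IsGrouping n 𝒢} (WTPtotal v)
    (finite_setOf_isGrouping n) ⟨_, isGrouping_singleton hn⟩
  obtain ⟨ℋ, hℋ, hcont, hle⟩ := h𝒢.exists_continuousGrouping_WTPtotal_le hn hv
  refine ⟨ℋ, hℋ, hcont, ⟨ℋ, hℋ, rfl⟩, ?_⟩
  rintro _ ⟨𝒢', h𝒢', rfl⟩
  exact (hmax 𝒢' h𝒢').trans hle

/-- Corollary 1: for any DAO with valuations `v_1 ≥ ⋯ ≥ v_n ≥ 0`,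
there is a continuous grouping achieving the maximum total willingness to pay
`opt_WTP` over all groupings. -/
theorem stmt1 (n : ℕ) (v : ℕ → ℝ) (hn : 1 ≤ n)
    (hmono : ∀ i j, 1 ≤ i → i ≤ j → j ≤ n → v j ≤ v i)
    (hnonneg : ∀ i, 1 ≤ i → i ≤ n → 0 ≤ v i) :
    ∃ 𝒢 : Finset (Finset ℕ),
      IsGrouping n 𝒢 ∧ ContinuousGrouping 𝒢 ∧
      IsGreatest {W : ℝ | ∃ 𝒢' : Finset (Finset ℕ), IsGrouping n 𝒢' ∧ WTPtotal v 𝒢' = W}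
        (WTPtotal v 𝒢) :=
  stmt1_general n v hn fun i hi j hj hij => hmono i j hi.1 hij hj.2

end
end

section
/- Fix α > 0, true values v_1,…,v_n > 0 of the DAO's members, a highest competing bid P > 0, and the other members' bids b_{−i}. Consider mechanism M_1 in rank-free form, where in each winning scenario a minimal feasible P_1 exists and is selected. Suppose both the truthful profile (v_i, b_{−i}) and an overbidding profile (b_i', b_{−i}) with b_i' > v_i are generic, i.e. WTP_total ≠ P under each profile. Then member i's collective utility (valued in the extended reals, with u_i = −∞ when p_i > v_i) under truthful bidding is at least its collective utility under overbidding: u_i(v_i, b_{−i}) ≥ u_i(b_i', b_{−i}). Together with the corresponding statement for underbidding, M_1 is incentive compatible in generic games. -/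
open scoped Classical

noncomputable section

/-- The aggregation function of mechanism `M_1` in rank-free form: for a bid profile
`b` and collectivism parameter `α`, `WTP_total(b)` is the max over thresholds
`t ∈ {b_1, …, b_n}` of `Σ_{j : b_j ≥ t} min(b_j, (1+α)·t)`. -/
def wtpTotalRF (n : ℕ) (α : ℝ) (b : Fin n → ℝ) : ℝ :=
  sSup {x : ℝ | ∃ t : Fin n,
    x = ∑ j ∈ Finset.univ.filter (fun j => b t ≤ b j), min (b j) ((1 + α) * b t)}

/-- `P_1 > 0` is feasible for profile `b` at price `P` if
`Σ_{i : b_i ≥ P_1/(1+α)} min(b_i, P_1) = P`. -/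
def FeasibleP1 (n : ℕ) (α P : ℝ) (b : Fin n → ℝ) (P1 : ℝ) : Prop :=
  0 < P1 ∧
  ∑ j ∈ Finset.univ.filter (fun j => P1 / (1 + α) ≤ b j), min (b j) P1 = P

/-- The access of member `j` in the rank-free `M_1` when the DAO wins with selected
price `P_1`: `min(1, b_j/P_1)` if `b_j ≥ P_1/(1+α)`, otherwise `0`. -/
def xRF (n : ℕ) (α : ℝ) (b : Fin n → ℝ) (P1 : ℝ) (j : Fin n) : ℝ :=
  if P1 / (1 + α) ≤ b j then min 1 (b j / P1) else 0

/-- The payment of member `j` in the rank-free `M_1` when the DAO wins with selected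
price `P_1`: `min(b_j, P_1)` if `b_j ≥ P_1/(1+α)`, otherwise `0`. -/
def pRF (n : ℕ) (α : ℝ) (b : Fin n → ℝ) (P1 : ℝ) (j : Fin n) : ℝ :=
  if P1 / (1 + α) ≤ b j then min (b j) P1 else 0

/-- The access of member `j` in the rank-free `M_1` at highest competing bid `P`:
if the DAO wins (`WTP_total(b) ≥ P`) this is `xRF` with the selected `P_1`,
otherwise `0`. -/
def outX (n : ℕ) (α : ℝ) (b : Fin n → ℝ) (P P1 : ℝ) (j : Fin n) : ℝ :=
  if P ≤ wtpTotalRF n α b then xRF n α b P1 j else 0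

/-- The payment of member `j` in the rank-free `M_1` at highest competing bid `P`:
if the DAO wins (`WTP_total(b) ≥ P`) this is `pRF` with the selected `P_1`,
otherwise `0`. -/
def outP (n : ℕ) (α : ℝ) (b : Fin n → ℝ) (P P1 : ℝ) (j : Fin n) : ℝ :=
  if P ≤ wtpTotalRF n α b then pRF n α b P1 j else 0

/-- The collective utility (extended-real valued) of member `i` with true values `v`,
accesses `x` and payments `p`: `v_i·x_i − p_i + α·Σ_j v_j·x_j` if `x_i > 0` and
`p_i ≤ v_i`; `−∞` if `p_i > v_i`; and `−p_i` if `x_i = 0`. -/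
def utilRF (n : ℕ) (α : ℝ) (v : Fin n → ℝ) (x p : Fin n → ℝ) (i : Fin n) : EReal :=
  if v i < p i then ⊥
  else if 0 < x i then ((v i * x i - p i + α * ∑ j, v j * x j : ℝ) : EReal)
  else ((-(p i) : ℝ) : EReal)

/-!
A member's payment is the price times the member's access, so at price `q` a member `i` with access
has utility `((1 + α) v_i - q) x_i + α ∑_{j ≠ i} v_j x_j`, which is nonnegative under a truthful bid
and can only grow when the price falls and the accesses rise.

Suppose a deviation gives `i` access at price `q` for a payment of at most `v_i`. Then the truthful
bid pays at least as much at the same price `q`, so the truthful profile collects at least `P`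
there. As the price increases, the collected total only jumps downwards, so it takes the value `P`
at some price at most `q`. Hence the truthful price is at most `q` and every access is at least as
large as under the deviation.
-/

section

variable {n : ℕ} {α P q r : ℝ} {b c v : Fin n → ℝ} {i j : Fin n}

theorem feasibleP1_iff_sum_pRF_eq :
    FeasibleP1 n α P b q ↔ 0 < q ∧ ∑ j, pRF n α b q j = P := by
  simp only [FeasibleP1, pRF, Finset.sum_filter]

theorem pRF_eq_mul_xRF (hq : 0 < q) : pRF n α b q j = q * xRF n α b q j := by
  rw [pRF, xRF, mul_ite, mul_zero, mul_min_of_nonneg _ _ hq.le, mul_one, mul_div_cancel₀ _ hq.ne',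
    min_comm]

theorem xRF_nonneg (hq : 0 ≤ q) (hb : 0 ≤ b j) : 0 ≤ xRF n α b q j := by
  unfold xRF
  split_ifs
  exacts [le_min zero_le_one (div_nonneg hb hq), le_rfl]

theorem pRF_nonneg (hq : 0 ≤ q) (hb : 0 ≤ b j) : 0 ≤ pRF n α b q j := by
  unfold pRF
  split_ifs
  exacts [le_min hb hq, le_rfl]

theorem xRF_pos_iff (hα : 0 ≤ α) (hq : 0 < q) : 0 < xRF n α b q j ↔ q / (1 + α) ≤ b j := by
  refine ⟨fun hx => by_contra fun hout => hx.ne' (if_neg hout), fun hin => ?_⟩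
  have hb : 0 < b j := lt_of_lt_of_le (by positivity) hin
  rw [xRF, if_pos hin]
  exact lt_min one_pos (div_pos hb hq)

theorem pRF_le_bid (hb : 0 ≤ b j) : pRF n α b q j ≤ b j := by
  unfold pRF
  split_ifs
  exacts [min_le_left _ _, hb]

theorem xRF_le_xRF_of_price_le (hα : 0 ≤ α) (hr : 0 < r) (hrq : r ≤ q) (hb : 0 ≤ b j) :
    xRF n α b q j ≤ xRF n α b r j := by
  by_cases hin : q / (1 + α) ≤ b j
  · have hin' : r / (1 + α) ≤ b j := le_trans (by gcongr) hin
    rw [xRF, xRF, if_pos hin, if_pos hin']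
    gcongr
  · rw [xRF, if_neg hin]
    exact xRF_nonneg hr.le hb

/-- A member with access pays at least `q / (1 + α)`, so a bid covering the payment is itself high
enough for access. -/
theorem pRF_le_pRF_of_le_bid (hα : 0 ≤ α) (hq : 0 ≤ q) (hc : 0 ≤ c j)
    (h : pRF n α b q j ≤ c j) : pRF n α b q j ≤ pRF n α c q j := by
  by_cases hin : q / (1 + α) ≤ b j
  · have hpay : pRF n α b q j = min (b j) q := if_pos hin
    have hin' : q / (1 + α) ≤ c j :=
      (le_min hin (div_le_self hq (by linarith))).trans (hpay ▸ h)
    rw [hpay] at h ⊢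
    rw [pRF, if_pos hin']
    exact le_min h (min_le_right _ _)
  · rw [pRF, if_neg hin]
    exact pRF_nonneg hq hc

theorem xRF_le_xRF_of_pRF_le_bid (hα : 0 ≤ α) (hr : 0 < r) (hrq : r ≤ q) (hc : 0 ≤ c j)
    (h : pRF n α b q j ≤ c j) : xRF n α b q j ≤ xRF n α c r j := by
  have hq : 0 < q := hr.trans_le hrq
  have hpay : q * xRF n α b q j ≤ q * xRF n α c q j := by
    simpa only [pRF_eq_mul_xRF hq] using pRF_le_pRF_of_le_bid hα hq.le hc h
  exact (le_of_mul_le_mul_left hpay hq).trans (xRF_le_xRF_of_price_le hα hr hrq hc)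

theorem sum_filter_le_wtpTotalRF (t : Fin n) :
    ∑ j with b t ≤ b j, min (b j) ((1 + α) * b t) ≤ wtpTotalRF n α b := by
  refine le_csSup (Set.Finite.bddAbove ?_) ⟨t, rfl⟩
  simpa only [Set.range, eq_comm] using
    Set.finite_range fun t => ∑ j with b t ≤ b j, min (b j) ((1 + α) * b t)

theorem sum_pRF_le_wtpTotalRF (hα : 0 ≤ α) (hi : q / (1 + α) ≤ b i) :
    ∑ j, pRF n α b q j ≤ wtpTotalRF n α b := by
  have hi' : i ∈ Finset.univ.filter fun j => q / (1 + α) ≤ b j := by simpa using hi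
  obtain ⟨t, ht, hmin⟩ := Finset.exists_min_image _ b ⟨i, hi'⟩
  simp only [Finset.mem_filter, Finset.mem_univ, true_and] at ht hmin
  have hiff (j : Fin n) : q / (1 + α) ≤ b j ↔ b t ≤ b j := ⟨hmin j, ht.trans⟩
  have hq : q ≤ (1 + α) * b t := (div_le_iff₀' (by linarith)).1 ht
  calc ∑ j, pRF n α b q j = ∑ j with b t ≤ b j, min (b j) q := by
        simp only [pRF, hiff, Finset.sum_filter]
    _ ≤ ∑ j with b t ≤ b j, min (b j) ((1 + α) * b t) := by gcongr
    _ ≤ wtpTotalRF n α b := sum_filter_le_wtpTotalRF t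

theorem exists_sum_min_eq {ι : Type*} {s : Finset ι} {a : ι → ℝ} (ha : ∀ j ∈ s, 0 ≤ a j)
    (hP : 0 < P) (hq : 0 ≤ q) (h : P ≤ ∑ j ∈ s, min (a j) q) :
    ∃ r, 0 < r ∧ r ≤ q ∧ ∑ j ∈ s, min (a j) r = P := by
  have hcont : Continuous fun r => ∑ j ∈ s, min (a j) r := by fun_prop
  have hzero : ∑ j ∈ s, min (a j) 0 = 0 := Finset.sum_eq_zero fun j hj => min_eq_right (ha j hj)
  obtain ⟨r, ⟨hr, hrq⟩, hsum⟩ :=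
    intermediate_value_Icc hq hcont.continuousOn ⟨hzero.trans_le hP.le, h⟩
  refine ⟨r, hr.lt_of_ne ?_, hrq, hsum⟩
  rintro rfl
  exact hP.ne (hzero.symm.trans hsum)

/-- Keeping the set of members with access at `q` fixed, lower the price until they pay exactly `P`.
Either nobody gains access, and the new price is feasible, or the set grows and we repeat. -/
theorem exists_feasibleP1_le (hα : 0 ≤ α) (hP : 0 < P) (hb : ∀ j, 0 ≤ b j) (hq : 0 < q)
    (h : P ≤ ∑ j, pRF n α b q j) : ∃ r ≤ q, FeasibleP1 n α P b r := by
  induction hs : Finset.univ.filter (fun j => q / (1 + α) ≤ b j)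
    using WellFoundedGT.induction generalizing q with
  | ind s ih =>
    have hsum : P ≤ ∑ j ∈ s, min (b j) q := by simpa only [pRF, ← Finset.sum_filter, hs] using h
    obtain ⟨r, hr, hrq, hrP⟩ := exists_sum_min_eq (fun j _ => hb j) hP hq.le hsum
    have hsub : s ⊆ Finset.univ.filter fun j => r / (1 + α) ≤ b j := by
      rw [← hs]
      exact Finset.monotone_filter_right _ fun j _ hj => le_trans (by gcongr) hj
    obtain hsame | hmore := hsub.eq_or_ssubset
    · exact ⟨r, hrq, hr, hsame ▸ hrP⟩
    · have hrsum : P ≤ ∑ j, pRF n α b r j := by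
        simp only [pRF, ← Finset.sum_filter]
        exact hrP.symm.trans_le <| Finset.sum_le_sum_of_subset_of_nonneg hsub fun j _ _ =>
          le_min (hb j) hr.le
      obtain ⟨t, htr, ht⟩ := ih _ hmore hr hrsum rfl
      exact ⟨t, htr.trans hrq, ht⟩

theorem utilRF_out_of_win (h : P ≤ wtpTotalRF n α b) :
    utilRF n α v (outX n α b P q) (outP n α b P q) i =
      utilRF n α v (xRF n α b q) (pRF n α b q) i := by
  simp only [utilRF, outX, outP, if_pos h]

theorem utilRF_out_of_lose (hv : 0 ≤ v i) (h : ¬P ≤ wtpTotalRF n α b) :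
    utilRF n α v (outX n α b P q) (outP n α b P q) i = 0 := by
  simp [utilRF, outX, outP, if_neg h, hv.not_gt]

theorem utilRF_of_no_access (hv : 0 ≤ v i) (h : ¬q / (1 + α) ≤ b i) :
    utilRF n α v (xRF n α b q) (pRF n α b q) i = 0 := by
  simp [utilRF, xRF, pRF, if_neg h, hv.not_gt]

theorem utilRF_of_access (hα : 0 ≤ α) (hq : 0 < q) (hin : q / (1 + α) ≤ b i)
    (hpay : pRF n α b q i ≤ v i) :
    utilRF n α v (xRF n α b q) (pRF n α b q) i =
      ((((1 + α) * v i - q) * xRF n α b q i +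
        α * ∑ j ∈ Finset.univ.erase i, v j * xRF n α b q j : ℝ) : EReal) := by
  rw [utilRF, if_neg hpay.not_gt, if_pos ((xRF_pos_iff hα hq).2 hin), pRF_eq_mul_xRF hq,
    ← Finset.add_sum_erase _ _ (Finset.mem_univ i)]
  congr 1
  ring

theorem utilRF_truthful_nonneg (hα : 0 ≤ α) (hq : 0 < q) (hv : ∀ j, 0 ≤ v j)
    (hb : ∀ j, 0 ≤ b j) (hi : b i = v i) :
    0 ≤ utilRF n α v (xRF n α b q) (pRF n α b q) i := by
  by_cases hin : q / (1 + α) ≤ b i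
  · have hpay : pRF n α b q i ≤ v i := hi ▸ pRF_le_bid (hb i)
    have hprice : 0 ≤ (1 + α) * v i - q :=
      sub_nonneg.2 ((div_le_iff₀' (by linarith)).1 (hi ▸ hin))
    have hx (j : Fin n) : 0 ≤ xRF n α b q j := xRF_nonneg hq.le (hb j)
    rw [utilRF_of_access hα hq hin hpay, EReal.coe_nonneg]
    exact add_nonneg (mul_nonneg hprice (hx i))
      (mul_nonneg hα (Finset.sum_nonneg fun j _ => mul_nonneg (hv j) (hx j)))
  · exact (utilRF_of_no_access (hv i) hin).ge

theorem utilRF_le_utilRF_of_xRF_le (hα : 0 ≤ α) (hr : 0 < r) (hrq : r ≤ q) (hv : ∀ j, 0 ≤ v j)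
    (hinb : q / (1 + α) ≤ b i) (hpayb : pRF n α b q i ≤ v i)
    (hi : c i = v i) (hx : ∀ j, xRF n α b q j ≤ xRF n α c r j) :
    utilRF n α v (xRF n α b q) (pRF n α b q) i ≤
      utilRF n α v (xRF n α c r) (pRF n α c r) i := by
  have hq : 0 < q := hr.trans_le hrq
  have hxi : 0 < xRF n α b q i := (xRF_pos_iff hα hq).2 hinb
  have hinc : r / (1 + α) ≤ c i := (xRF_pos_iff hα hr).1 (hxi.trans_le (hx i))
  have hpayc : pRF n α c r i ≤ v i :=
    hi ▸ pRF_le_bid ((div_nonneg hr.le (by linarith)).trans hinc)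
  have hprice : 0 ≤ (1 + α) * v i - r :=
    sub_nonneg.2 ((div_le_iff₀' (by linarith)).1 (hi ▸ hinc))
  rw [utilRF_of_access hα hq hinb hpayb, utilRF_of_access hα hr hinc hpayc,
    EReal.coe_le_coe_iff]
  gcongr with j
  exacts [hx i, hv j, hx j]

theorem utilRF_out_truthful_nonneg (hα : 0 ≤ α) (hv : ∀ j, 0 ≤ v j) (hc : ∀ j, 0 ≤ c j)
    (hi : c i = v i) (hr : P ≤ wtpTotalRF n α c → 0 < r) :
    0 ≤ utilRF n α v (outX n α c P r) (outP n α c P r) i := by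
  by_cases hwin : P ≤ wtpTotalRF n α c
  · rw [utilRF_out_of_win hwin]
    exact utilRF_truthful_nonneg hα (hr hwin) hv hc hi
  · exact (utilRF_out_of_lose (hv i) hwin).ge

theorem FeasibleP1.utilRF_le_truthful (hα : 0 ≤ α) (hP : 0 < P) (hv : ∀ j, 0 ≤ v j)
    (hc : ∀ j, 0 ≤ c j) (hi : c i = v i) (hfeas : FeasibleP1 n α P b q)
    (hin : q / (1 + α) ≤ b i) (hpay : ∀ j, pRF n α b q j ≤ c j)
    (hr : P ≤ wtpTotalRF n α c → IsLeast {p | FeasibleP1 n α P c p} r) :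
    utilRF n α v (xRF n α b q) (pRF n α b q) i ≤
      utilRF n α v (outX n α c P r) (outP n α c P r) i := by
  obtain ⟨hq, hsum⟩ := feasibleP1_iff_sum_pRF_eq.1 hfeas
  have hcover : P ≤ ∑ j, pRF n α c q j :=
    hsum.symm.trans_le (Finset.sum_le_sum fun j _ => pRF_le_pRF_of_le_bid hα hq.le (hc j) (hpay j))
  have hinc : q / (1 + α) ≤ c i := (xRF_pos_iff hα hq).1 <|
    ((xRF_pos_iff hα hq).2 hin).trans_le (xRF_le_xRF_of_pRF_le_bid hα hq le_rfl (hc i) (hpay i))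
  have hwin : P ≤ wtpTotalRF n α c := hcover.trans (sum_pRF_le_wtpTotalRF hα hinc)
  obtain ⟨p, hpq, hp⟩ := exists_feasibleP1_le hα hP hc hq hcover
  have hr0 : 0 < r := (hr hwin).1.1
  have hrq : r ≤ q := ((hr hwin).2 hp).trans hpq
  rw [utilRF_out_of_win hwin]
  exact utilRF_le_utilRF_of_xRF_le hα hr0 hrq hv hin (hi ▸ hpay i) hi fun j =>
    xRF_le_xRF_of_pRF_le_bid hα hr0 hrq (hc j) (hpay j)

theorem stmt15_general (hα : 0 ≤ α) (hP : 0 < P) (hv : ∀ j, 0 ≤ v j) (hb : ∀ j, 0 ≤ b j)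
    (b' : ℝ)
    (hr : P ≤ wtpTotalRF n α (Function.update b i (v i)) →
      IsLeast {p | FeasibleP1 n α P (Function.update b i (v i)) p} r)
    (hq : P ≤ wtpTotalRF n α (Function.update b i b') →
      FeasibleP1 n α P (Function.update b i b') q) :
    utilRF n α v (outX n α (Function.update b i b') P q)
        (outP n α (Function.update b i b') P q) i ≤
      utilRF n α v (outX n α (Function.update b i (v i)) P r)
        (outP n α (Function.update b i (v i)) P r) i := by
  have hi : Function.update b i (v i) i = v i := Function.update_self ..
  have hc : ∀ j, 0 ≤ Function.update b i (v i) j :=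
    Function.forall_update_iff b (fun _ x => 0 ≤ x) |>.2 ⟨hv i, fun j _ => hb j⟩
  have htruth := utilRF_out_truthful_nonneg hα hv hc hi fun hwin => (hr hwin).1.1
  by_cases hwin : P ≤ wtpTotalRF n α (Function.update b i b')
  swap
  · rwa [utilRF_out_of_lose (hv i) hwin]
  rw [utilRF_out_of_win hwin]
  by_cases hin : q / (1 + α) ≤ Function.update b i b' i
  swap
  · rwa [utilRF_of_no_access (hv i) hin]
  by_cases hpay : v i < pRF n α (Function.update b i b') q i
  · rw [utilRF, if_pos hpay]
    exact bot_le
  refine (hq hwin).utilRF_le_truthful hα hP hv hc hi hin (fun j => ?_) hr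
  obtain rfl | hj := eq_or_ne j i
  · exact hi.symm ▸ not_lt.1 hpay
  · have hbid : Function.update b i b' j = b j := Function.update_of_ne hj ..
    rw [Function.update_of_ne hj, ← hbid]
    exact pRF_le_bid (hbid ▸ hb j)

end

/-- no profitable overbidding in generic games: fix `α > 0`, true
values `v > 0`, a highest competing bid `P > 0` and the others' bids.  If the truthful
profile `(v_i, b_{-i})` and an overbidding profile `(b_i', b_{-i})` with `b_i' > v_i`
are both generic (`WTP_total ≠ P`), and in each winning scenario a minimal feasible
`P_1` exists and is selected, then member `i`'s collective utility (extended-real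
valued, `−∞` when `p_i > v_i`) under truthful bidding is at least that under
overbidding.  Together with the corresponding statement for underbidding, `M_1` is
incentive compatible in generic games. -/
theorem stmt15 (n : ℕ) (α P : ℝ) (hα : 0 < α) (hP : 0 < P)
    (v : Fin n → ℝ) (hv : ∀ j, 0 < v j) (i : Fin n)
    (b : Fin n → ℝ) (hb : ∀ j, 0 < b j)
    (b' : ℝ) (hb'gt : v i < b')
    (B1 B2 : Fin n → ℝ)
    (hB1 : B1 = Function.update b i (v i))
    (hB2 : B2 = Function.update b i b')
    (hgen1 : wtpTotalRF n α B1 ≠ P)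
    (hgen2 : wtpTotalRF n α B2 ≠ P)
    (P1a P1b : ℝ)
    (hsel1 : P ≤ wtpTotalRF n α B1 → IsLeast {q : ℝ | FeasibleP1 n α P B1 q} P1a)
    (hsel2 : P ≤ wtpTotalRF n α B2 → IsLeast {q : ℝ | FeasibleP1 n α P B2 q} P1b) :
    utilRF n α v (outX n α B2 P P1b) (outP n α B2 P P1b) i ≤
      utilRF n α v (outX n α B1 P P1a) (outP n α B1 P P1a) i := by
  subst hB1 hB2
  exact stmt15_general hα.le hP (fun j => (hv j).le) (fun j => (hb j).le) b' hsel1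
    fun hwin => (hsel2 hwin).1

end
end
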